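/- Let β ≥ 2 be a real number and s, t ∈ ℝ. For every n ≥ 1, Δ_n(β, s, t) ≤ min{ min{|qs − p| : p, q ∈ B_n, (p, q) ≠ (0, 0)}, min{|qt − p| : p, q ∈ B_n, (p, q) ≠ (0, 0)} }. -/

import Mathlib

/-!
Multiplying `φ_w(0)` by `β ^ n` turns it into the polynomial in `β` whose coefficients are the
translation digits of `w` in reversed order (`pow_mul_phiWord_zero`). Given `p, q ∈ B_n`, use the
0/1-coefficients of `q` to choose between the letters with digits `s` (or `t`) and `0`, and those
of `p` to choose between the letters with digits `1` and `0`. The two words obtained satisfy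
`β ^ n * (φ_i(0) - φ_j(0)) = q * s - p`, and they can coincide only if all coefficients vanish,
i.e. `p = q = 0`. As `β ^ n ≥ 1`, this gives `Δ_n ≤ |φ_i(0) - φ_j(0)| ≤ |q * s - p|`.
-/

open Filter Polynomial

/-- The four maps of the IFS Φ_{β,s,t}: x/β, (x+1)/β, (x+s)/β, (x+t)/β. -/
noncomputable def phiMap (β s t : ℝ) : Fin 4 → ℝ → ℝ
  | 0 => fun x => x / β
  | 1 => fun x => (x + 1) / β
  | 2 => fun x => (x + s) / β
  | 3 => fun x => (x + t) / β

/-- For a word w = i₁…iₙ, the composition φ_{i₁} ∘ ⋯ ∘ φ_{iₙ}. -/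
noncomputable def phiWord (β s t : ℝ) {n : ℕ} (w : Fin n → Fin 4) : ℝ → ℝ :=
  (List.ofFn fun k => phiMap β s t (w k)).foldr (· ∘ ·) id

/-- Φ_{β,s,t} has exact overlaps: two distinct words of the same length n ≥ 1
give the same map. -/
def HasExactOverlaps (β s t : ℝ) : Prop :=
  ∃ n : ℕ, 1 ≤ n ∧ ∃ i j : Fin n → Fin 4, i ≠ j ∧ phiWord β s t i = phiWord β s t j

/-- Δ_n(β,s,t) = min over distinct words i ≠ j of length n of |φ_i(0) − φ_j(0)|. -/
noncomputable def Delta (β s t : ℝ) (n : ℕ) : ℝ :=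
  sInf {d : ℝ | ∃ i j : Fin n → Fin 4, i ≠ j ∧ d = |phiWord β s t i 0 - phiWord β s t j 0|}

/-- B_n = { Σ_{j=1}^n ω_j β^{j-1} : ω_j ∈ {0,1} }. -/
def Bset (β : ℝ) (n : ℕ) : Set ℝ :=
  {x : ℝ | ∃ ω : Fin n → ℝ, (∀ j, ω j = 0 ∨ ω j = 1) ∧ x = ∑ j : Fin n, ω j * β ^ (j : ℕ)}

/-- The translation digit of each letter: `phiMap β s t i x = (x + digit s t i) / β`. -/
noncomputable def digit (s t : ℝ) : Fin 4 → ℝ := ![0, 1, s, t]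

lemma phiMap_eq (β s t : ℝ) (i : Fin 4) (x : ℝ) :
    phiMap β s t i x = (x + digit s t i) / β := by
  fin_cases i <;> simp [phiMap, digit]

lemma pow_mul_phiWord_zero (β s t : ℝ) (hβ : β ≠ 0) :
    ∀ (n : ℕ) (w : Fin n → Fin 4),
      β ^ n * phiWord β s t w 0 = ∑ k : Fin n, digit s t (w k.rev) * β ^ (k : ℕ)
  | 0, w => by simp [phiWord]
  | n + 1, w => by
    have ih := pow_mul_phiWord_zero β s t hβ n (fun k => w k.succ)
    have h : phiWord β s t w 0 = phiMap β s t (w 0) (phiWord β s t (fun k => w k.succ) 0) := by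
      simp [phiWord, List.ofFn_succ]
    rw [h, phiMap_eq, Fin.sum_univ_castSucc]
    simp only [Fin.rev_castSucc, Fin.val_castSucc, Fin.rev_last, Fin.val_last]
    rw [← ih]
    field_simp
    ring

/-- The bound for a single pair `(p, q)`; the letter `c` is `2` (digit `s`) or `3` (digit `t`) in
the application, and only `c ∉ {0, 1}` matters for the distinctness of the two words. -/
lemma Delta_le (β s t : ℝ) (hβ : 2 ≤ β) (n : ℕ) (c : Fin 4) (hc0 : c ≠ 0) (hc1 : c ≠ 1)
    (p q : ℝ) (hp : p ∈ Bset β n) (hq : q ∈ Bset β n) (hpq : (p, q) ≠ (0, 0)) :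
    Delta β s t n ≤ |q * digit s t c - p| := by
  classical
  obtain ⟨a, ha, rfl⟩ := hp
  obtain ⟨b, hb, rfl⟩ := hq
  let i : Fin n → Fin 4 := fun k => if b k.rev = 1 then c else 0
  let j : Fin n → Fin 4 := fun k => if a k.rev = 1 then 1 else 0
  have hij : i ≠ j := by
    intro h
    apply hpq
    have key : ∀ k, a k = 0 ∧ b k = 0 := by
      intro k
      have hk := congrFun h k.rev
      simp only [i, j, Fin.rev_rev] at hk
      rcases ha k with h1 | h1 <;> rcases hb k with h2 | h2 <;> simp_all
    simp [key]
  have hi : β ^ n * phiWord β s t i 0 = (∑ k : Fin n, b k * β ^ (k : ℕ)) * digit s t c := by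
    rw [pow_mul_phiWord_zero β s t (by positivity), Finset.sum_mul]
    refine Finset.sum_congr rfl fun k _ => ?_
    rcases hb k with h | h <;> simp [i, h, digit, mul_comm]
  have hj : β ^ n * phiWord β s t j 0 = ∑ k : Fin n, a k * β ^ (k : ℕ) := by
    rw [pow_mul_phiWord_zero β s t (by positivity)]
    refine Finset.sum_congr rfl fun k _ => ?_
    rcases ha k with h | h <;> simp [j, h, digit]
  have hpow : 1 ≤ β ^ n := one_le_pow₀ (by linarith)
  rw [← hi, ← hj, ← mul_sub, abs_mul, abs_of_nonneg (by linarith)]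
  refine le_trans (csInf_le ⟨0, ?_⟩ ⟨i, j, hij, rfl⟩)
    (le_mul_of_one_le_left (abs_nonneg _) hpow)
  rintro _ ⟨_, _, _, rfl⟩
  exact abs_nonneg _

/-- The set of values `|q * x - p|` is nonempty, so its `sInf` is not the junk value of `∅`. -/
lemma approx_nonempty (β x : ℝ) (n : ℕ) (hn : 1 ≤ n) :
    {d : ℝ | ∃ p ∈ Bset β n, ∃ q ∈ Bset β n, (p, q) ≠ (0, 0) ∧ d = |q * x - p|}.Nonempty := by
  have h1 : (1 : ℝ) ∈ Bset β n := by
    refine ⟨Pi.single ⟨0, hn⟩ 1, fun j => ?_, ?_⟩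
    · by_cases h : j = ⟨0, hn⟩ <;> simp [h]
    · simp [Pi.single_apply]
  exact ⟨_, 1, h1, 1, h1, by simp, rfl⟩

/-- Δ_n(β,s,t) ≤ min of the two minima
min{|qs−p| : p,q ∈ B_n, (p,q) ≠ (0,0)} and min{|qt−p| : p,q ∈ B_n, (p,q) ≠ (0,0)}. -/
theorem stmt1 (β s t : ℝ) (hβ : 2 ≤ β) (n : ℕ) (hn : 1 ≤ n) :
    Delta β s t n ≤
      min (sInf {d : ℝ | ∃ p ∈ Bset β n, ∃ q ∈ Bset β n, (p, q) ≠ (0, 0) ∧ d = |q * s - p|})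
          (sInf {d : ℝ | ∃ p ∈ Bset β n, ∃ q ∈ Bset β n, (p, q) ≠ (0, 0) ∧ d = |q * t - p|}) := by
  refine le_min (le_csInf (approx_nonempty β s n hn) ?_) (le_csInf (approx_nonempty β t n hn) ?_)
  · rintro _ ⟨p, hp, q, hq, hpq, rfl⟩
    exact Delta_le β s t hβ n 2 (by decide) (by decide) p q hp hq hpq
  · rintro _ ⟨p, hp, q, hq, hpq, rfl⟩
    exact Delta_le β s t hβ n 3 (by decide) (by decide) p q hp hq hpq
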